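/- Let K be a field of characteristic different from 2 and let f(x_1,…,x_m) be a multilinear polynomial over K. Then the image Im(f) of f evaluated on M_2(K) equals sl_2(K) if and only if f satisfies (S2) and f does not satisfy (S1) (with respect to the Vasilovsky Z_2-grading on M_2(K)). -/

import Mathlib

/-- Evaluation of the multilinear polynomial `f(x₁,…,x_m) = ∑_{σ ∈ S_m} α_σ x_{σ(1)}⋯x_{σ(m)}`
given by coefficients `α` at the tuple `a`. -/
def mlEval {K A : Type} [Field K] [Ring A] [Algebra K A] {m : ℕ}
    (α : Equiv.Perm (Fin m) → K) (a : Fin m → A) : A :=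
  ∑ σ : Equiv.Perm (Fin m), α σ • (List.ofFn fun i => a (σ i)).prod

/-- The image of the multilinear polynomial with coefficients `α` on the algebra `A`. -/
def mlImage {K A : Type} [Field K] [Ring A] [Algebra K A] {m : ℕ}
    (α : Equiv.Perm (Fin m) → K) : Set A :=
  Set.range (mlEval α)

/-- `a` is homogeneous of degree `g` in the Vasilovsky `ZMod n`-grading of `Mₙ(K)`:
`a` lies in the span of the matrix units `E i j` with `j - i ≡ g (mod n)`. -/
def VasHomog {K : Type} [Field K] {n : ℕ} (g : ZMod n)
    (a : Matrix (Fin n) (Fin n) K) : Prop :=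
  ∀ i j : Fin n, ((j.val : ZMod n) - (i.val : ZMod n)) ≠ g → a i j = 0

/-- Statement (S0): `f` vanishes on homogeneous tuples whose degrees sum to `0`. -/
def StmtS0 {K : Type} [Field K] (n : ℕ) {m : ℕ} (α : Equiv.Perm (Fin m) → K) : Prop :=
  ∀ (g : Fin m → ZMod n) (a : Fin m → Matrix (Fin n) (Fin n) K),
    (∀ i, VasHomog (g i) (a i)) → (∑ i, g i) = 0 → mlEval α a = 0

/-- Statement (S1): `f` vanishes on homogeneous tuples whose degrees sum to a nonzero element. -/
def StmtS1 {K : Type} [Field K] (n : ℕ) {m : ℕ} (α : Equiv.Perm (Fin m) → K) : Prop :=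
  ∀ (g : Fin m → ZMod n) (a : Fin m → Matrix (Fin n) (Fin n) K),
    (∀ i, VasHomog (g i) (a i)) → (∑ i, g i) ≠ 0 → mlEval α a = 0

/-- Statement (S2): `f` has trace-zero values on homogeneous tuples whose degrees sum to `0`. -/
def StmtS2 {K : Type} [Field K] (n : ℕ) {m : ℕ} (α : Equiv.Perm (Fin m) → K) : Prop :=
  ∀ (g : Fin m → ZMod n) (a : Fin m → Matrix (Fin n) (Fin n) K),
    (∀ i, VasHomog (g i) (a i)) → (∑ i, g i) = 0 → Matrix.trace (mlEval α a) = 0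

/-- The set of scalar matrices in `Mₙ(K)`. -/
def scalarSet (K : Type) [Field K] (n : ℕ) : Set (Matrix (Fin n) (Fin n) K) :=
  {b | ∃ c : K, b = c • (1 : Matrix (Fin n) (Fin n) K)}

/-- The set `slₙ(K)` of trace-zero matrices in `Mₙ(K)`. -/
def slSet (K : Type) [Field K] (n : ℕ) : Set (Matrix (Fin n) (Fin n) K) :=
  {b | Matrix.trace b = 0}

/-!
All matrix units are homogeneous for the grading of `Mₙ(K)` by `ℤ / n`, so by multilinearity (S2)
says that every value of `f` has trace zero, and (S1) that every value is diagonal. What has to be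
shown is that for `n = 2` a non-diagonal value forces `sl₂(K) ⊆ Im(f)`.

Some tuple of matrix units then has a nonzero value of degree `1`. The same formula `j - i` also
grades `M₂(K)` by `ℤ`; swapping the indices `0` and `1` in all the matrix units negates the degree
of the value over `ℤ` but not over `ℤ / 2`, so it yields a second, linearly independent value on a
tuple with the same degrees in `ℤ / 2`. A multilinear map into a plane that has two linearly
independent values is surjective, so every antidiagonal matrix is a value. Finally `Im(f)` is stable
under conjugation, and a nonscalar matrix of trace zero is similar to its companion matrix, which is
antidiagonal; in characteristic different from `2` the only scalar matrix of trace zero is `0`.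
-/

section MultilinearMap

variable {K ι W : Type*} {V : ι → Type*} [Field K] [AddCommGroup W] [Module K W]
  [∀ i, AddCommGroup (V i)] [∀ i, Module K (V i)]

theorem linearIndependent_pair_add_add {a b c e : W} (hab : LinearIndependent K ![a, b])
    (hac : ¬ LinearIndependent K ![a, c]) (hcb : ¬ LinearIndependent K ![c, b])
    (heb : ¬ LinearIndependent K ![e, b]) : LinearIndependent K ![a + e, c + b] := by
  have ha : a ≠ 0 := hab.ne_zero 0
  have hb : b ≠ 0 := hab.ne_zero 1
  rw [LinearIndependent.pair_symm_iff] at hcb heb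
  simp only [LinearIndependent.pair_iff' ha, LinearIndependent.pair_iff' hb, not_forall,
    not_not] at hac hcb heb
  obtain ⟨r, rfl⟩ := hac
  obtain ⟨s, hs⟩ := hcb
  obtain ⟨t, rfl⟩ := heb
  have hr : r = 0 :=
    (LinearIndependent.pair_iff.1 hab r (-s) (by rw [neg_smul, hs, add_neg_cancel])).1
  simpa [hr] using hab

/-- Going from `v` to `w` one coordinate at a time does not suffice, since intermediate values may
vanish; in the induction step one also has to change a coordinate to `v i + w i`. -/
theorem exists_update_linearIndependent [Finite ι] [DecidableEq ι] (f : MultilinearMap K V W)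
    {v w : ∀ i, V i} (h : LinearIndependent K ![f v, f w]) :
    ∃ u i x y, LinearIndependent K ![f (Function.update u i x), f (Function.update u i y)] := by
  cases nonempty_fintype ι
  by_contra! hline
  suffices H : ∀ (s : Finset ι) (v : ∀ i, V i), ¬ LinearIndependent K ![f v, f (s.piecewise w v)] by
    exact H Finset.univ v (by rwa [Finset.piecewise_univ])
  intro s
  induction s using Finset.induction_on with
  | empty =>
    intro v hv
    simpa using hv.injective.ne zero_ne_one
  | insert i s hi ih =>
    intro v hv
    rw [Finset.piecewise_insert] at hv
    have ih_update (x : V i) : ¬ LinearIndependent K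
        ![f (Function.update v i x), f (Function.update (s.piecewise w v) i x)] := by
      rw [Finset.update_piecewise_of_notMem s w v hi]
      exact ih _
    have hstart : ¬ LinearIndependent K ![f v, f (s.piecewise w v)] := ih v
    have hstep : ¬ LinearIndependent K
        ![f (s.piecewise w v), f (Function.update (s.piecewise w v) i (w i))] := by
      simpa using hline (s.piecewise w v) i (s.piecewise w v i) (w i)
    have hsum := linearIndependent_pair_add_add hv hstart hstep (ih_update (w i))
    have hvi : v i = s.piecewise w v i := (s.piecewise_eq_of_notMem w v hi).symm
    apply ih_update (v i + w i)
    simpa [Function.update_eq_self_iff.2 hvi] using hsum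

theorem surjective_of_linearIndependent_of_finrank_eq_two [Finite ι] (f : MultilinearMap K V W)
    (hW : Module.finrank K W = 2) {v w : ∀ i, V i} (h : LinearIndependent K ![f v, f w]) :
    Function.Surjective f := by
  classical
  obtain ⟨u, i, x, y, hxy⟩ := exists_update_linearIndependent f h
  intro z
  have hz : z ∈ Submodule.span K {f (Function.update u i x), f (Function.update u i y)} := by
    have hspan := hxy.span_eq_top_of_card_eq_finrank (by simp [hW])
    rw [Matrix.range_cons_cons_empty] at hspan
    exact hspan ▸ Submodule.mem_top
  obtain ⟨c, e, rfl⟩ := Submodule.mem_span_pair.1 hz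
  exact ⟨Function.update u i (c • x + e • y), by simp⟩

end MultilinearMap

section Evaluation

variable {K A B : Type} [Field K] [Ring A] [Algebra K A] [Ring B] [Algebra K B] {m : ℕ}
  (α : Equiv.Perm (Fin m) → K)

/-- The evaluation `mlEval α` of a multilinear polynomial, as a multilinear map. -/
noncomputable def mlEvalMap : MultilinearMap K (fun _ : Fin m => A) A :=
  ∑ σ : Equiv.Perm (Fin m), α σ • (MultilinearMap.mkPiAlgebraFin K m A).domDomCongr σ

theorem mlEvalMap_apply (a : Fin m → A) : mlEvalMap α a = mlEval α a := by
  simp [mlEvalMap, mlEval]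

theorem map_mlEval (φ : A →ₐ[K] B) (a : Fin m → A) :
    φ (mlEval α a) = mlEval α (fun k => φ (a k)) := by
  simp [mlEval, map_list_prod, List.map_ofFn, Function.comp_def]

variable {α} in
theorem units_conj_mem_mlImage (u : Aˣ) {a : A} (ha : a ∈ mlImage α) :
    u * a * ↑u⁻¹ ∈ mlImage α := by
  obtain ⟨x, rfl⟩ := ha
  exact ⟨_, (map_mlEval α (MulSemiringAction.toAlgHom K A (ConjAct.toConjAct u)) x).symm⟩

theorem mlEval_mem_of_basis {ι : Type*} (b : Module.Basis ι K A) (N : Submodule K A)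
    (h : ∀ r : Fin m → ι, mlEval α (fun k => b (r k)) ∈ N) (a : Fin m → A) : mlEval α a ∈ N := by
  have hzero : N.mkQ.compMultilinearMap (mlEvalMap α) = 0 :=
    Module.Basis.ext_multilinear (fun _ => b) fun r => by
      simpa [mlEvalMap_apply] using h r
  simpa [mlEvalMap_apply] using congr($hzero a)

section Graded

variable {Γ : Type*} [AddCommMonoid Γ] (𝒜 : Γ → Submodule K A) [SetLike.GradedMonoid 𝒜]
  {g : Fin m → Γ}

theorem mlEval_mem_graded {a : Fin m → A} (ha : ∀ k, a k ∈ 𝒜 (g k)) :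
    mlEval α a ∈ 𝒜 (∑ k, g k) := by
  refine Submodule.sum_mem _ fun σ _ => Submodule.smul_mem _ _ ?_
  rw [← Equiv.sum_comp σ g, ← List.sum_ofFn]
  exact SetLike.list_prod_ofFn_mem_graded _ _ fun k => ha (σ k)

theorem graded_subset_mlImage_of_linearIndependent {u v : Fin m → A} (hu : ∀ k, u k ∈ 𝒜 (g k))
    (hv : ∀ k, v k ∈ 𝒜 (g k)) (huv : LinearIndependent K ![mlEval α u, mlEval α v])
    (hdim : Module.finrank K (𝒜 (∑ k, g k)) = 2) :
    (𝒜 (∑ k, g k) : Set A) ⊆ mlImage α := by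
  let f : MultilinearMap K (fun k => 𝒜 (g k)) (𝒜 (∑ k, g k)) :=
    ((mlEvalMap α).compLinearMap fun k => (𝒜 (g k)).subtype).codRestrict _ fun x => by
      simpa [mlEvalMap_apply] using mlEval_mem_graded α 𝒜 fun k => (x k).2
  have hf (x : ∀ k, 𝒜 (g k)) : (f x : A) = mlEval α fun k => (x k : A) := by
    simp [f, mlEvalMap_apply]
  have hindep : LinearIndependent K ![f fun k => ⟨u k, hu k⟩, f fun k => ⟨v k, hv k⟩] := by
    rw [LinearIndependent.pair_iff] at huv ⊢
    intro s t hst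
    apply huv s t
    simpa [hf] using congr(($hst : A))
  intro z hz
  obtain ⟨x, hx⟩ := surjective_of_linearIndependent_of_finrank_eq_two f hdim hindep ⟨z, hz⟩
  exact ⟨fun k => x k, by rw [← hf, hx]⟩

end Graded

end Evaluation

/-- The elementary grading of a matrix algebra: the matrix unit `E i j` has degree `d j - d i`. -/
def elementaryGrading (R : Type*) [Semiring R] {ι Γ : Type*} [AddCommGroup Γ] (d : ι → Γ)
    (g : Γ) : Submodule R (Matrix ι ι R) where
  carrier := {M | ∀ i j, d j - d i ≠ g → M i j = 0}
  zero_mem' _ _ _ := rfl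
  add_mem' hM hN i j hij := by simp [hM i j hij, hN i j hij]
  smul_mem' c M hM i j hij := by simp [hM i j hij]

namespace elementaryGrading

variable {R ι Γ : Type*} [Semiring R] [AddCommGroup Γ] {d : ι → Γ} {g h : Γ}
  {M : Matrix ι ι R}

theorem apply_self_eq_zero (hM : M ∈ elementaryGrading R d g) (hg : g ≠ 0) (i : ι) :
    M i i = 0 :=
  hM i i (by rwa [sub_self, ne_comm])

theorem trace_eq_zero [Fintype ι] (hM : M ∈ elementaryGrading R d g) (hg : g ≠ 0) :
    M.trace = 0 :=
  Finset.sum_eq_zero fun i _ => apply_self_eq_zero hM hg i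

theorem disjoint (hgh : g ≠ h) :
    Disjoint (elementaryGrading R d g) (elementaryGrading R d h) := by
  rw [Submodule.disjoint_def]
  intro M hg hh
  ext i j
  by_cases hij : d j - d i = g
  · exact hh i j (hij ▸ hgh)
  · exact hg i j hij

theorem linearIndependent_pair {K : Type*} [DivisionRing K] {M N : Matrix ι ι K} (hgh : g ≠ h)
    (hM : M ∈ elementaryGrading K d g) (hN : N ∈ elementaryGrading K d h) (hM0 : M ≠ 0)
    (hN0 : N ≠ 0) : LinearIndependent K ![M, N] := by
  rw [LinearIndependent.pair_iff' hM0]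
  rintro c rfl
  exact hN0 (Submodule.disjoint_def.1 (disjoint hgh) _ (Submodule.smul_mem _ c hM) hN)

theorem single_mem [DecidableEq ι] (i j : ι) (c : R) :
    Matrix.single i j c ∈ elementaryGrading R d (d j - d i) := by
  intro k l hkl
  apply Matrix.single_apply_of_ne
  rintro ⟨rfl, rfl⟩
  exact hkl rfl

instance [Fintype ι] [DecidableEq ι] : SetLike.GradedMonoid (elementaryGrading R d) where
  one_mem i j hij := Matrix.one_apply_ne (by rintro rfl; simp at hij)
  mul_mem g h M N hM hN i j hij := by
    rw [Matrix.mul_apply]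
    refine Finset.sum_eq_zero fun k _ => ?_
    by_cases hik : d k - d i = g
    · have hkj : d j - d k ≠ h := by
        rintro rfl
        exact hij (by rw [← hik]; abel)
      rw [hN k j hkj, mul_zero]
    · rw [hM i k hik, zero_mul]

variable (R d g) in
/-- Coordinates of a homogeneous matrix: its entries at the positions of degree `g`. -/
def entriesEquiv [DecidableEq Γ] :
    elementaryGrading R d g ≃ₗ[R] ({p : ι × ι // d p.2 - d p.1 = g} → R) where
  toFun M p := M.1 p.1.1 p.1.2
  invFun x := ⟨Matrix.of fun i j => if hij : d j - d i = g then x ⟨(i, j), hij⟩ else 0,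
    fun i j hij => by simp [hij]⟩
  map_add' _ _ := rfl
  map_smul' _ _ := rfl
  left_inv M := by
    ext i j
    by_cases hij : d j - d i = g
    · simp [hij]
    · simp [hij, M.2 i j hij]
  right_inv x := by
    funext ⟨p, hp⟩
    simp [hp]

theorem finrank_eq [StrongRankCondition R] [Fintype ι] [DecidableEq Γ] :
    Module.finrank R (elementaryGrading R d g) =
      Fintype.card {p : ι × ι // d p.2 - d p.1 = g} := by
  rw [(entriesEquiv R d g).finrank_eq, Module.finrank_fintype_fun_eq_card]

theorem mlEval_single_mem {K : Type} [Field K] {m : ℕ} {ι : Type} [Fintype ι] [DecidableEq ι]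
    (d : ι → Γ) (α : Equiv.Perm (Fin m) → K) (i j : Fin m → ι) :
    mlEval α (fun k => Matrix.single (i k) (j k) 1) ∈
      elementaryGrading K d (∑ k, (d (j k) - d (i k))) :=
  mlEval_mem_graded α _ fun k => single_mem (i k) (j k) 1

end elementaryGrading

section MatrixUnits

variable {K : Type} [Field K] {m : ℕ} {α : Equiv.Perm (Fin m) → K}

theorem mlEval_mem_of_single {ι : Type} [Fintype ι] [DecidableEq ι]
    (N : Submodule K (Matrix ι ι K))
    (h : ∀ i j : Fin m → ι, mlEval α (fun k => Matrix.single (i k) (j k) 1) ∈ N)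
    (a : Fin m → Matrix ι ι K) : mlEval α a ∈ N :=
  mlEval_mem_of_basis α (Matrix.stdBasis K ι ι) N
    (fun r => by
      simpa only [← Matrix.stdBasis_eq_single] using h (fun k => (r k).1) fun k => (r k).2) a

theorem mlEval_single_perm_ne_zero {ι : Type} [Fintype ι] [DecidableEq ι] (e : Equiv.Perm ι)
    {i j : Fin m → ι} (h : mlEval α (fun k => Matrix.single (i k) (j k) (1 : K)) ≠ 0) :
    mlEval α (fun k => Matrix.single (e (i k)) (e (j k)) (1 : K)) ≠ 0 := by
  let φ : Matrix ι ι K ≃ₐ[K] Matrix ι ι K := Matrix.reindexAlgEquiv K K e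
  have hφ (k : Fin m) :
      φ (Matrix.single (i k) (j k) 1) = Matrix.single (e (i k)) (e (j k)) 1 := by
    simp [φ]
  simp_rw [← hφ]
  rw [← AlgEquiv.coe_toAlgHom, ← map_mlEval]
  exact (map_ne_zero_iff φ φ.injective).2 h

theorem val_rev_sub_val_rev {R : Type*} [AddCommGroupWithOne R] {n : ℕ} (i j : Fin n) :
    (j.rev.val : R) - i.rev.val = -(j.val - i.val) := by
  rw [Fin.val_rev, Fin.val_rev, Nat.cast_sub j.isLt, Nat.cast_sub i.isLt]
  push_cast
  abel

theorem linearIndependent_mlEval_single_rev {n : ℕ} {i j : Fin m → Fin n}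
    (hne : mlEval α (fun k => Matrix.single (i k) (j k) (1 : K)) ≠ 0)
    (hdeg : ∑ k, (((j k).val : ℤ) - (i k).val) ≠ 0) :
    LinearIndependent K ![mlEval α fun k => Matrix.single (i k) (j k) (1 : K),
      mlEval α fun k => Matrix.single (i k).rev (j k).rev (1 : K)] := by
  let d : Fin n → ℤ := fun i => i.val
  have hmem := elementaryGrading.mlEval_single_mem d α i j
  have hmem_rev := elementaryGrading.mlEval_single_mem d α (fun k => (i k).rev) fun k => (j k).rev
  simp only [d, val_rev_sub_val_rev, Finset.sum_neg_distrib] at hmem_rev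
  exact elementaryGrading.linearIndependent_pair (self_ne_neg.2 hdeg) hmem hmem_rev hne
    (mlEval_single_perm_ne_zero Fin.revPerm hne)

end MatrixUnits

section Vasilovsky

variable {K : Type} [Field K] {n m : ℕ} {α : Equiv.Perm (Fin m) → K}

variable (K n) in
/-- The Vasilovsky grading of `Mₙ(K)` by `ZMod n`: membership in the piece of degree `g` unfolds
to `VasHomog g`. -/
abbrev vasGrading : ZMod n → Submodule K (Matrix (Fin n) (Fin n) K) :=
  elementaryGrading K fun i : Fin n => (i.val : ZMod n)

theorem stmtS1_iff_forall_mem_vasGrading_zero :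
    StmtS1 n α ↔ ∀ a, mlEval α a ∈ vasGrading K n 0 := by
  constructor
  · refine fun h => mlEval_mem_of_single _ fun i j => ?_
    have hmem := elementaryGrading.mlEval_single_mem (fun i : Fin n => (i.val : ZMod n)) α i j
    by_cases hdeg : ∑ k, (((j k).val : ZMod n) - (i k).val) = 0
    · rwa [hdeg] at hmem
    · rw [h _ _ (fun k => elementaryGrading.single_mem _ _ _) hdeg]
      exact Submodule.zero_mem _
  · intro h g a ha hg
    exact Submodule.disjoint_def.1 (elementaryGrading.disjoint hg) _
      (mlEval_mem_graded α (vasGrading K n) ha) (h a)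

theorem stmtS2_iff_forall_trace_eq_zero :
    StmtS2 n α ↔ ∀ a : Fin m → Matrix (Fin n) (Fin n) K, (mlEval α a).trace = 0 := by
  refine ⟨fun h => ?_, fun h _ a _ _ => h a⟩
  refine mlEval_mem_of_single (LinearMap.ker (Matrix.traceLinearMap (Fin n) K K)) fun i j => ?_
  by_cases hdeg : ∑ k, (((j k).val : ZMod n) - (i k).val) = 0
  · exact h _ _ (fun k => elementaryGrading.single_mem _ _ _) hdeg
  · exact elementaryGrading.trace_eq_zero
      (elementaryGrading.mlEval_single_mem (fun i : Fin n => (i.val : ZMod n)) α i j) hdeg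

theorem eq_zero_of_mem_scalarSet_of_trace_eq_zero (hn : (n : K) ≠ 0)
    {M : Matrix (Fin n) (Fin n) K} (hM : M ∈ scalarSet K n) (htr : M.trace = 0) : M = 0 := by
  obtain ⟨c, rfl⟩ := hM
  have hc : c = 0 := by simpa [hn] using htr
  rw [hc, zero_smul]

end Vasilovsky

section TwoByTwo

variable {K : Type} [Field K] {m : ℕ} {α : Equiv.Perm (Fin m) → K}

theorem finrank_vasGrading_two (g : ZMod 2) : Module.finrank K (vasGrading K 2 g) = 2 := by
  rw [elementaryGrading.finrank_eq]
  revert g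
  decide

theorem vasGrading_one_subset_mlImage (h : ¬ StmtS1 2 α) :
    (vasGrading K 2 1 : Set (Matrix (Fin 2) (Fin 2) K)) ⊆ mlImage α := by
  rw [stmtS1_iff_forall_mem_vasGrading_zero] at h
  obtain ⟨i, j, hij⟩ : ∃ i j : Fin m → Fin 2,
      mlEval α (fun k => Matrix.single (i k) (j k) 1) ∉ vasGrading K 2 0 := by
    by_contra! hij
    exact h (mlEval_mem_of_single _ hij)
  have hdeg : ∑ k, (((j k).val : ZMod 2) - (i k).val) = 1 := by
    have hmem := elementaryGrading.mlEval_single_mem (fun i : Fin 2 => (i.val : ZMod 2)) α i j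
    refine Fin.eq_one_of_ne_zero _ fun hzero => hij ?_
    rwa [hzero] at hmem
  have hdeg_int : ∑ k, (((j k).val : ℤ) - (i k).val) ≠ 0 := by
    refine fun hzero => one_ne_zero (α := ZMod 2) ?_
    rw [← hdeg]
    exact_mod_cast congr(($hzero : ZMod 2))
  have hindep := linearIndependent_mlEval_single_rev
    (ne_of_mem_of_not_mem (Submodule.zero_mem _) hij).symm hdeg_int
  have hrev (k : Fin m) : Matrix.single (i k).rev (j k).rev (1 : K) ∈
      vasGrading K 2 ((j k).val - (i k).val) := by
    rw [← ZMod.neg_eq_self_mod_two ((j k).val - (i k).val), ← val_rev_sub_val_rev]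
    exact elementaryGrading.single_mem _ _ _
  rw [← hdeg]
  exact graded_subset_mlImage_of_linearIndependent α (vasGrading K 2)
    (fun k => elementaryGrading.single_mem _ _ _) hrev hindep (finrank_vasGrading_two _)

theorem exists_units_conj_companion {M : Matrix (Fin 2) (Fin 2) K} (hM : M ∉ scalarSet K 2) :
    ∃ u : (Matrix (Fin 2) (Fin 2) K)ˣ,
      M = u.val * !![0, -M.det; 1, M.trace] * u⁻¹.val := by
  -- The columns of `P x y` are `v = (x, y)` and `M v`, and `M (M v) = tr M • M v - det M • v`.
  let P (x y : K) : Matrix (Fin 2) (Fin 2) K :=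
    !![x, M 0 0 * x + M 0 1 * y; y, M 1 0 * x + M 1 1 * y]
  obtain ⟨x, y, hdet⟩ : ∃ x y, (P x y).det ≠ 0 := by
    by_contra! hP
    have h10 : M 1 0 = 0 := by simpa [P, Matrix.det_fin_two] using hP 1 0
    have h01 : M 0 1 = 0 := by simpa [P, Matrix.det_fin_two] using hP 0 1
    have h11 : M 1 1 = M 0 0 := by
      simpa [P, Matrix.det_fin_two, h10, h01, sub_eq_zero] using hP 1 1
    refine hM ⟨M 0 0, ?_⟩
    ext i j
    fin_cases i <;> fin_cases j <;> simp [h10, h01, h11]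
  refine ⟨Matrix.GeneralLinearGroup.mkOfDetNeZero (P x y) hdet, ?_⟩
  rw [Units.eq_mul_inv_iff_mul_eq]
  change M * P x y = P x y * _
  ext i j
  fin_cases i <;> fin_cases j <;>
    simp [P, Matrix.mul_apply, Fin.sum_univ_two, Matrix.det_fin_two, Matrix.trace_fin_two] <;> ring

theorem slSet_two_subset_mlImage (hchar : (2 : K) ≠ 0) (h : ¬ StmtS1 2 α) :
    slSet K 2 ⊆ mlImage α := by
  intro M htr
  by_cases hM : M ∈ scalarSet K 2
  · rw [eq_zero_of_mem_scalarSet_of_trace_eq_zero (mod_cast hchar) hM htr]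
    exact vasGrading_one_subset_mlImage h (Submodule.zero_mem _)
  · obtain ⟨u, hu⟩ := exists_units_conj_companion hM
    rw [hu]
    refine units_conj_mem_mlImage u (vasGrading_one_subset_mlImage h ?_)
    intro i j hij
    rw [show M.trace = 0 from htr]
    fin_cases i <;> fin_cases j <;> simp at hij ⊢

end TwoByTwo

/-- over a field of characteristic different from `2`, the image of a multilinear
polynomial on `M₂(K)` equals `sl₂(K)` iff `f` satisfies (S2) and does not satisfy (S1) (with
respect to the Vasilovsky `ℤ₂`-grading). -/
theorem stmt_13 {K : Type} [Field K] (hchar : (2 : K) ≠ 0) {m : ℕ}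
    (α : Equiv.Perm (Fin m) → K) :
    (mlImage α : Set (Matrix (Fin 2) (Fin 2) K)) = slSet K 2 ↔
      StmtS2 2 α ∧ ¬ StmtS1 2 α := by
  rw [stmtS2_iff_forall_trace_eq_zero]
  constructor
  · intro himage
    refine ⟨fun a => himage.subset ⟨a, rfl⟩, fun hS1 => ?_⟩
    have htr : (Matrix.single 0 1 1 : Matrix (Fin 2) (Fin 2) K) ∈ slSet K 2 := by
      simp [slSet]
    obtain ⟨a, ha⟩ := himage.superset htr
    simpa [ha] using stmtS1_iff_forall_mem_vasGrading_zero.1 hS1 a 0 1 (by decide)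
  · rintro ⟨htrace, hS1⟩
    exact (Set.range_subset_iff.2 htrace).antisymm (slSet_two_subset_mlImage hchar hS1)
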